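/- arXiv:math/9510204 — 5 statements merged into one kernel-verified Lean document; each statement's English description precedes it below -/
import Mathlib

section
/- The function D is invariant under the simultaneous homographic action of G on H × H: for every g ∈ GL(2,F) and all z, w ∈ H, one has N(g·z − g·w) · N(z − w̄) = N(z − w) · N(g·z − conj(g·w)), where conj denotes the conjugation x ↦ x̄ of E over F (this is the identity D(g·z, g·w) = D(z,w) written without denominators, so that the convention D(z,w) = ∞ for w = z̄ is handled). -/
/-- Conjugation `x ↦ x^q` of the quadratic extension `E` of the field `F`
with `q` elements. -/
def conjE (F : Type) [Fintype F] {E : Type} [Monoid E] (z : E) : E :=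
  z ^ (Fintype.card F)

/-- The norm `N(z) = z ⬝ z̄` of `E` over `F`. -/
def normE (F : Type) [Fintype F] {E : Type} [Monoid E] (z : E) : E :=
  z * conjE F z

/-- The homographic (Möbius) action of `GL(2,F)` on the finite upper
half-plane `H = E ∖ F`. -/
noncomputable def mobius (F : Type) [Field F] {E : Type} [Field E] [Algebra F E]
    (g : Matrix.GeneralLinearGroup (Fin 2) F) (z : E) : E :=
  (algebraMap F E ((g : Matrix (Fin 2) (Fin 2) F) 0 0) * z
      + algebraMap F E ((g : Matrix (Fin 2) (Fin 2) F) 0 1)) /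
  (algebraMap F E ((g : Matrix (Fin 2) (Fin 2) F) 1 0) * z
      + algebraMap F E ((g : Matrix (Fin 2) (Fin 2) F) 1 1))

/- The difference formula `g·z - g·w = det g (z - w) / ((cz + d)(cw + d))` makes `N(g·z - g·w)`
equal to `N(z - w)` up to the factor `N(det g) / (N(cz + d) N(cw + d))`. As `g` has coefficients
in `F`, conjugation commutes with it, so the same formula applies to `z` and `w̄`, and the factor is
unchanged because an element and its conjugate have the same norm. -/

section Mobius

variable {F E E' : Type} [Field F] [Field E] [Algebra F E] [Field E'] [Algebra F E']

/-- The automorphy factor `c z + d` of `g = [[a, b], [c, d]]`, i.e. the denominator of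
`mobius F g z`; where it vanishes, `mobius F g z` takes the junk value `0` instead of `∞`. -/
def mobiusDenom (g : Matrix.GeneralLinearGroup (Fin 2) F) (z : E) : E :=
  algebraMap F E (g.val 1 0) * z + algebraMap F E (g.val 1 1)

theorem mobiusDenom_ne_zero_of_notMem_range (g : Matrix.GeneralLinearGroup (Fin 2) F) {z : E}
    (hz : z ∉ Set.range (algebraMap F E)) : mobiusDenom g z ≠ 0 := by
  intro hdenom
  rw [mobiusDenom] at hdenom
  by_cases hc : g.val 1 0 = 0
  · have hd : g.val 1 1 = 0 := by simpa [hc] using hdenom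
    exact g.det_ne_zero (by rw [Matrix.det_fin_two, hc, hd, mul_zero, mul_zero, sub_zero])
  · refine hz ⟨-g.val 1 1 / g.val 1 0, ?_⟩
    rw [map_div₀, map_neg, div_eq_iff ((map_ne_zero _).2 hc)]
    linear_combination -hdenom

theorem mobius_sub_mobius {g : Matrix.GeneralLinearGroup (Fin 2) F} {z w : E}
    (hz : mobiusDenom g z ≠ 0) (hw : mobiusDenom g w ≠ 0) :
    mobius F g z - mobius F g w =
      algebraMap F E g.val.det * (z - w) / (mobiusDenom g z * mobiusDenom g w) := by
  rw [mobiusDenom] at hz hw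
  rw [mobius, mobius, div_sub_div _ _ hz hw, Matrix.det_fin_two, map_sub, map_mul, map_mul,
    mobiusDenom, mobiusDenom]
  ring

theorem map_mobiusDenom (σ : E →ₐ[F] E') (g : Matrix.GeneralLinearGroup (Fin 2) F) (z : E) :
    σ (mobiusDenom g z) = mobiusDenom g (σ z) := by
  simp only [mobiusDenom, map_add, map_mul, AlgHom.commutes]

theorem map_mobius (σ : E →ₐ[F] E') (g : Matrix.GeneralLinearGroup (Fin 2) F) (z : E) :
    σ (mobius F g z) = mobius F g (σ z) := by
  simp only [mobius, map_div₀, map_add, map_mul, AlgHom.commutes]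

end Mobius

section ConjNorm

variable {F E : Type*} [CommSemiring F] [CommSemiring E] [Algebra F E]

/-- The norm `x ↦ x * σ x` attached to a conjugation `σ` of `E` over `F`, bundled as a
multiplicative map with values in `E`. -/
def conjNorm (σ : E →ₐ[F] E) : E →*₀ E where
  toFun x := x * σ x
  map_zero' := zero_mul _
  map_one' := by rw [map_one, one_mul]
  map_mul' x y := by rw [map_mul, mul_mul_mul_comm]

theorem conjNorm_apply (σ : E →ₐ[F] E) (x : E) : conjNorm σ x = x * σ x :=
  rfl

theorem conjNorm_map {σ : E →ₐ[F] E} (hσ : Function.Involutive σ) (x : E) :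
    conjNorm σ (σ x) = conjNorm σ x := by
  rw [conjNorm_apply, conjNorm_apply, hσ x, mul_comm]

end ConjNorm

section Frobenius

theorem frobeniusAlgHom_involutive_of_finrank_eq_two {F E : Type*} [Field F] [Fintype F] [Field E]
    [Algebra F E] (hdim : Module.finrank F E = 2) :
    Function.Involutive (FiniteField.frobeniusAlgHom F E) := by
  have : Module.Finite F E := Module.finite_of_finrank_eq_succ hdim
  have : Finite E := Module.finite_of_finite F
  have hsq : FiniteField.frobeniusAlgHom F E ^ 2 = 1 := by
    rw [← hdim, ← FiniteField.orderOf_frobeniusAlgHom F E, pow_orderOf_eq_one]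
  intro x
  rw [← AlgHom.mul_apply, ← pow_two, hsq, AlgHom.one_apply]

variable {F E : Type} [Field F] [Fintype F] [CommRing E] [Algebra F E]

theorem conjE_eq_frobeniusAlgHom (x : E) : conjE F x = FiniteField.frobeniusAlgHom F E x :=
  rfl

theorem normE_eq_conjNorm_frobeniusAlgHom (x : E) :
    normE F x = conjNorm (FiniteField.frobeniusAlgHom F E) x :=
  rfl

end Frobenius

theorem D_invariant_under_homographic_action_general {F E : Type} [Field F] [Field E] [Algebra F E]
    {σ : E →ₐ[F] E} (hσ : Function.Involutive σ) {g : Matrix.GeneralLinearGroup (Fin 2) F}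
    {z w : E} (hz : mobiusDenom g z ≠ 0) (hw : mobiusDenom g w ≠ 0) :
    conjNorm σ (mobius F g z - mobius F g w) * conjNorm σ (z - σ w) =
      conjNorm σ (z - w) * conjNorm σ (mobius F g z - σ (mobius F g w)) := by
  have hσw : mobiusDenom g (σ w) ≠ 0 := by
    rw [← map_mobiusDenom]
    exact (map_ne_zero σ).2 hw
  have hnorm : conjNorm σ (mobiusDenom g (σ w)) = conjNorm σ (mobiusDenom g w) := by
    rw [← map_mobiusDenom, conjNorm_map hσ]
  rw [map_mobius, mobius_sub_mobius hz hw, mobius_sub_mobius hz hσw]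
  simp only [map_div₀, map_mul, hnorm]
  ring

/-- **Invariance of `D`** : the function `D(z,w) = N(z−w)/N(z−w̄)` is invariant
under the simultaneous homographic action of `GL(2,F)` on `H × H`, written in
cross-multiplied form. -/
theorem D_invariant_under_homographic_action
    (F E : Type) [Field F] [Fintype F] [Field E] [Fintype E] [Algebra F E]
    (hdim : Module.finrank F E = 2)
    (g : Matrix.GeneralLinearGroup (Fin 2) F) (z w : E)
    (hz : z ∉ Set.range (algebraMap F E)) (hw : w ∉ Set.range (algebraMap F E)) :
    normE F (mobius F g z - mobius F g w) * normE F (z - conjE F w)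
      = normE F (z - w) * normE F (mobius F g z - conjE F (mobius F g w)) := by
  simp only [normE_eq_conjNorm_frobeniusAlgHom, conjE_eq_frobeniusAlgHom]
  exact D_invariant_under_homographic_action_general
    (frobeniusAlgHom_involutive_of_finrank_eq_two hdim)
    (mobiusDenom_ne_zero_of_notMem_range g hz) (mobiusDenom_ne_zero_of_notMem_range g hw)
end

section
/- The G-orbits in H × H under the homographic action are symmetric: for all z, w ∈ H there exists g ∈ GL(2,F) such that g·z = w and g·w = z. -/
/-!
In a quadratic extension the elements `1`, `z + w` and `z * w` satisfy a nontrivial relation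
`c * (z * w) = a * (z + w) + b` over `F`. Solved for `w` it says that the traceless matrix
`!![a, b; c, -a]` sends `z` to `w`; since it is symmetric in `z` and `w`, the same matrix sends `w`
to `z`. The matrix is invertible because `a ^ 2 + b * c = (c * z - a) * (c * w - a)`, whose factors
are nonzero as `z` and `w` do not lie in `F`.
-/

section Algebra

variable {F E : Type*} [Field F] [Ring E] [Algebra F E]

theorem algebraMap_mul_add_algebraMap_ne_zero {c d : F} (hcd : c ≠ 0 ∨ d ≠ 0) {z : E}
    (hz : z ∉ Set.range (algebraMap F E)) :
    algebraMap F E c * z + algebraMap F E d ≠ 0 := by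
  have : Nontrivial E := not_subsingleton_iff_nontrivial.1 fun _ ↦ hz ⟨0, Subsingleton.elim _ _⟩
  intro h
  obtain rfl | hc := eq_or_ne c 0
  · simp_all
  · refine hz ⟨c⁻¹ * -d, ?_⟩
    rw [map_mul, map_neg, ← eq_neg_of_add_eq_zero_left h, ← mul_assoc, ← map_mul,
      inv_mul_cancel₀ hc, map_one, one_mul]

theorem exists_algebraMap_mul_eq_of_finrank_eq_two (hdim : Module.finrank F E = 2) (x y : E) :
    ∃ a b c : F, (c ≠ 0 ∨ a ≠ 0) ∧
      algebraMap F E c * x = algebraMap F E a * y + algebraMap F E b := by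
  have : Nontrivial E := Module.nontrivial_of_finrank_pos (R := F) (by lia)
  have : Module.Finite F E := Module.finite_of_finrank_pos (by lia)
  have hdep : ¬ LinearIndependent F ![x, y, 1] := fun h ↦ by
    simpa [hdim] using h.fintype_card_le_finrank
  obtain ⟨k, hk, i, hi⟩ := Fintype.not_linearIndependent_iff.1 hdep
  have hrel : algebraMap F E (k 0) * x + algebraMap F E (k 1) * y + algebraMap F E (k 2) = 0 := by
    simpa [Fin.sum_univ_three, Algebra.smul_def] using hk
  refine ⟨-k 1, -k 2, k 0, ?_, ?_⟩
  · by_contra! hzero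
    obtain ⟨h0, h1⟩ : k 0 = 0 ∧ k 1 = 0 := by simpa using hzero
    have h2 : k 2 = 0 := by simpa [h0, h1] using hrel
    fin_cases i <;> contradiction
  · rw [map_neg, map_neg, neg_mul, ← neg_add, eq_neg_iff_add_eq_zero, ← add_assoc, hrel]

end Algebra

theorem det_traceless_ne_zero {F E : Type*} [Field F] [Field E] [Algebra F E] {a b c : F} {z w : E}
    (hca : c ≠ 0 ∨ a ≠ 0)
    (hz : z ∉ Set.range (algebraMap F E)) (hw : w ∉ Set.range (algebraMap F E))
    (hrel : algebraMap F E c * (z * w) = algebraMap F E a * (z + w) + algebraMap F E b) :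
    !![a, b; c, -a].det ≠ 0 := by
  have hca' : c ≠ 0 ∨ -a ≠ 0 := by rwa [neg_ne_zero]
  have hfactor : algebraMap F E !![a, b; c, -a].det =
      -((algebraMap F E c * z + algebraMap F E (-a)) *
        (algebraMap F E c * w + algebraMap F E (-a))) := by
    simp only [Matrix.det_fin_two_of, map_sub, map_mul, map_neg]
    linear_combination algebraMap F E c * hrel
  rw [← map_ne_zero (algebraMap F E), hfactor, neg_ne_zero]
  exact mul_ne_zero (algebraMap_mul_add_algebraMap_ne_zero hca' hz)
    (algebraMap_mul_add_algebraMap_ne_zero hca' hw)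

section Mobius

variable {F E : Type} [Field F] [Field E] [Algebra F E] {a b c : F} {z w : E}

theorem mobius_denom_ne_zero (g : Matrix.GeneralLinearGroup (Fin 2) F)
    (hz : z ∉ Set.range (algebraMap F E)) :
    algebraMap F E (g 1 0) * z + algebraMap F E (g 1 1) ≠ 0 := by
  refine algebraMap_mul_add_algebraMap_ne_zero ?_ hz
  by_contra! hrow
  exact g.det_ne_zero (by simp [Matrix.det_fin_two, hrow])

theorem mobius_eq_iff (g : Matrix.GeneralLinearGroup (Fin 2) F)
    (hz : z ∉ Set.range (algebraMap F E)) :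
    mobius F g z = w ↔
      algebraMap F E (g 0 0) * z + algebraMap F E (g 0 1) =
        w * (algebraMap F E (g 1 0) * z + algebraMap F E (g 1 1)) :=
  div_eq_iff (mobius_denom_ne_zero g hz)

theorem mobius_traceless_eq_iff (hdet : !![a, b; c, -a].det ≠ 0)
    (hz : z ∉ Set.range (algebraMap F E)) :
    mobius F (.mkOfDetNeZero !![a, b; c, -a] hdet) z = w ↔
      algebraMap F E c * (z * w) = algebraMap F E a * (z + w) + algebraMap F E b := by
  have hcoe : (Matrix.GeneralLinearGroup.mkOfDetNeZero _ hdet).val = !![a, b; c, -a] := rfl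
  simp only [mobius_eq_iff _ hz, hcoe, Matrix.of_apply, Matrix.cons_val', Matrix.cons_val_zero,
    Matrix.cons_val_one, map_neg]
  constructor <;> intro h <;> linear_combination -h

end Mobius

theorem orbits_symmetric_general {F E : Type} [Field F] [Field E] [Algebra F E]
    (hdim : Module.finrank F E = 2) {z w : E}
    (hz : z ∉ Set.range (algebraMap F E)) (hw : w ∉ Set.range (algebraMap F E)) :
    ∃ g : Matrix.GeneralLinearGroup (Fin 2) F, mobius F g z = w ∧ mobius F g w = z := by
  obtain ⟨a, b, c, hca, hrel⟩ := exists_algebraMap_mul_eq_of_finrank_eq_two hdim (z * w) (z + w)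
  have hdet : !![a, b; c, -a].det ≠ 0 := det_traceless_ne_zero hca hz hw hrel
  refine ⟨.mkOfDetNeZero !![a, b; c, -a] hdet, (mobius_traceless_eq_iff hdet hz).2 hrel,
    (mobius_traceless_eq_iff hdet hw).2 ?_⟩
  rwa [mul_comm w z, add_comm w z]

/-- **Symmetry of the `G`-orbits in `H × H`** : for any two points `z, w` of
the finite upper half-plane `H = E ∖ F` there is a `g ∈ GL(2,F)` swapping
them under the homographic action. -/
theorem orbits_symmetric
    (F E : Type) [Field F] [Fintype F] [Field E] [Fintype E] [Algebra F E]
    (hdim : Module.finrank F E = 2)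
    (z w : E)
    (hz : z ∉ Set.range (algebraMap F E)) (hw : w ∉ Set.range (algebraMap F E)) :
    ∃ g : Matrix.GeneralLinearGroup (Fin 2) F,
      mobius F g z = w ∧ mobius F g w = z :=
  orbits_symmetric_general hdim hz hw
end

section
/- Let χ be the character of an irreducible complex representation of G. Then P_Φ χ is a nonzero function if and only if (P_Φ χ)(e) ≠ 0. -/
/-- A representation is irreducible: the space is nonzero and the only
invariant submodules are `⊥` and `⊤`. -/
def RepIsIrreducible {G V : Type} [Group G] [AddCommGroup V] [Module ℂ V]
    (π : Representation ℂ G V) : Prop :=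
  (∃ v : V, v ≠ 0) ∧
    ∀ W : Submodule ℂ V, (∀ g : G, ∀ v ∈ W, π g v ∈ W) → W = ⊥ ∨ W = ⊤

/-- The averaging operator `P_Φ` : `(P_Φ f)(g) = |K|⁻¹ Σ_{k ∈ K} Φ(k)⁻¹ f(k g)`. -/
noncomputable def Pavg {G : Type} [Group G] (K : Subgroup G) [Fintype K]
    (Φ : K →* ℂˣ) (f : G → ℂ) : G → ℂ :=
  fun g => (1 / (Fintype.card K) : ℂ) * ∑ k : K, (((Φ k)⁻¹ : ℂˣ) : ℂ) * f ((k : G) * g)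

/-!
Let `E` be the operator on `V` that averages `Φ(k)⁻¹ π(k)` over `K`, so that
`(P_Φ χ)(g) = tr (E π(g))`. Since `E` is the projection onto the `K`-invariants of `π` twisted by
`Φ⁻¹`, its trace `(P_Φ χ)(e)` is its rank. If that vanishes, then `E = 0` and `P_Φ χ = 0`.
-/

section Twist

variable {k G V : Type*} [CommSemiring k] [Monoid G] [AddCommMonoid V] [Module k V]

/-- The twist of a representation `ρ` by a one-dimensional character `ψ`, i.e. `ψ ⊗ ρ` realised on
the space of `ρ` itself. -/
def twist (ψ : G →* k) (ρ : Representation k G V) : Representation k G V where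
  toFun g := ψ g • ρ g
  map_one' := by rw [map_one, map_one, one_smul]
  map_mul' g h := by rw [map_mul, map_mul, smul_mul_smul_comm]

theorem twist_apply (ψ : G →* k) (ρ : Representation k G V) (g : G) :
    twist ψ ρ g = ψ g • ρ g :=
  rfl

end Twist

section AverageMap

variable {k G V : Type*} [Group G] [Fintype G] [AddCommGroup V]

theorem trace_averageMap_mul [CommRing k] [Module k V] [Invertible (Fintype.card G : k)]
    (ρ : Representation k G V) (f : Module.End k V) :
    LinearMap.trace k V (ρ.averageMap * f) =
      ⅟(Fintype.card G : k) * ∑ g, LinearMap.trace k V (ρ g * f) := by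
  simp only [Representation.averageMap, GroupAlgebra.average, map_smul, map_sum,
    Representation.asAlgebraHom_of, smul_mul_assoc, Finset.sum_mul, smul_eq_mul]

theorem trace_averageMap_eq_zero_iff [Field k] [CharZero k] [Module k V] [FiniteDimensional k V]
    [Invertible (Fintype.card G : k)] (ρ : Representation k G V) :
    LinearMap.trace k V ρ.averageMap = 0 ↔ ρ.averageMap = 0 :=
  LinearMap.IsIdempotentElem.trace_eq_zero_iff ρ.isProj_averageMap.isIdempotentElem

end AverageMap

section Pavg

variable {G : Type} {V : Type*} [Group G] [AddCommGroup V] [Module ℂ V]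
  (K : Subgroup G) [Fintype K] (Φ : K →* ℂˣ) (π : Representation ℂ G V)

theorem Pavg_trace_eq_trace_averageMap_mul [Invertible (Fintype.card K : ℂ)] (g : G) :
    Pavg K Φ (fun x => LinearMap.trace ℂ V (π x)) g =
      LinearMap.trace ℂ V
        ((twist ((Units.coeHom ℂ).comp Φ⁻¹) (π.comp K.subtype)).averageMap * π g) := by
  rw [trace_averageMap_mul, Pavg, one_div, invOf_eq_inv]
  simp [twist_apply]

theorem Pavg_char_ne_zero_iff_at_one_general [FiniteDimensional ℂ V] :
    Pavg K Φ (fun g => LinearMap.trace ℂ V (π g)) ≠ 0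
      ↔ Pavg K Φ (fun g => LinearMap.trace ℂ V (π g)) 1 ≠ 0 := by
  let : Invertible (Fintype.card K : ℂ) :=
    invertibleOfNonzero (Nat.cast_ne_zero.mpr Fintype.card_ne_zero)
  refine not_congr ⟨fun h => congrFun h 1, fun h => ?_⟩
  rw [Pavg_trace_eq_trace_averageMap_mul, map_one, mul_one, trace_averageMap_eq_zero_iff] at h
  funext g
  rw [Pavg_trace_eq_trace_averageMap_mul, h, zero_mul, map_zero, Pi.zero_apply]

end Pavg

/-- For the character `χ` of an irreducible representation of a finite group
`G`, the averaged function `P_Φ χ` is nonzero iff it does not vanish at the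
identity. -/
theorem Pavg_char_ne_zero_iff_at_one
    (G : Type) [Group G] [Fintype G]
    (K : Subgroup G) [Fintype K] (Φ : K →* ℂˣ)
    (V : Type) [AddCommGroup V] [Module ℂ V] [FiniteDimensional ℂ V]
    (π : Representation ℂ G V) (hπ : RepIsIrreducible π) :
    Pavg K Φ (fun g => LinearMap.trace ℂ V (π g)) ≠ 0
      ↔ Pavg K Φ (fun g => LinearMap.trace ℂ V (π g)) 1 ≠ 0 :=
  Pavg_char_ne_zero_iff_at_one_general K Φ π
end

section
/- The map P_Φ is multiplicative on central functions: if f₁ : G → ℂ is a class function (constant on conjugacy classes) and f₂ : G → ℂ is any function, then P_Φ(f₁ * f₂) = (P_Φ f₁) * (P_Φ f₂), where (f * f')(g) = Σ_{h ∈ G} f(h) f'(h⁻¹ g). -/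
/-- Convolution of complex functions on a finite group. -/
noncomputable def conv {G : Type} [Group G] [Fintype G] (f f' : G → ℂ) : G → ℂ :=
  fun g => ∑ h : G, f h * f' (h⁻¹ * g)

/-!
`P_Φ` is the projection of `G → ℂ` onto the functions that transform under left translation by `K`
through `Φ`. Convolution on the right commutes with left translations, hence with `P_Φ`, and so does
convolution on the left by a function invariant under conjugation by `K`. Therefore
`P_Φ f₁ * P_Φ f₂ = P_Φ (f₁ * P_Φ f₂) = P_Φ (P_Φ (f₁ * f₂)) = P_Φ (f₁ * f₂)`.
-/

section Translation

variable {G : Type} [Group G] [Fintype G]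

theorem conv_comp_mul_left (f f' : G → ℂ) (k g : G) :
    conv (fun x => f (k * x)) f' g = conv f f' (k * g) :=
  Fintype.sum_equiv (Equiv.mulLeft k) _ _ fun h => by
    have translate_arg : (k * h)⁻¹ * (k * g) = h⁻¹ * g := by group
    rw [Equiv.coe_mulLeft, translate_arg]

theorem conv_comp_mul_left_of_conj_invariant {f : G → ℂ} {k : G}
    (hf : ∀ g, f (k * g * k⁻¹) = f g) (f' : G → ℂ) (g : G) :
    conv f (fun x => f' (k * x)) g = conv f f' (k * g) :=
  Fintype.sum_equiv (MulAut.conj k).toEquiv _ _ fun h => by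
    have conj_arg : (k * h * k⁻¹)⁻¹ * (k * g) = k * (h⁻¹ * g) := by group
    rw [MulEquiv.toEquiv_eq_coe, MulEquiv.coe_toEquiv, MulAut.conj_apply, hf, conj_arg]

end Translation

section Projection

variable {G : Type} [Group G] (K : Subgroup G) [Fintype K] (Φ : K →* ℂˣ)

theorem Pavg_mul_left (f : G → ℂ) (k : K) (g : G) :
    Pavg K Φ f (k * g) = Φ k * Pavg K Φ f g := by
  have reindex : ∑ l : K, (((Φ l)⁻¹ : ℂˣ) : ℂ) * f (l * (k * g)) =
      ∑ m : K, (Φ k : ℂ) * ((((Φ m)⁻¹ : ℂˣ) : ℂ) * f (m * g)) :=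
    Fintype.sum_equiv (Equiv.mulRight k) _ _ fun l => by
      simp [mul_assoc]
  unfold Pavg
  rw [reindex, ← Finset.mul_sum, mul_left_comm]

variable {K Φ} in
theorem Pavg_eq_self {f : G → ℂ} (hf : ∀ (k : K) (g : G), f (k * g) = Φ k * f g) :
    Pavg K Φ f = f := by
  funext g
  have summand (k : K) : (((Φ k)⁻¹ : ℂˣ) : ℂ) * f (k * g) = f g := by
    rw [hf, Units.inv_mul_cancel_left]
  simp only [Pavg, summand]
  simp

theorem Pavg_idem (f : G → ℂ) : Pavg K Φ (Pavg K Φ f) = Pavg K Φ f :=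
  Pavg_eq_self (Pavg_mul_left K Φ f)

end Projection

section Convolution

variable {G : Type} [Group G] [Fintype G] (K : Subgroup G) [Fintype K] (Φ : K →* ℂˣ)

theorem conv_Pavg_left (f f' : G → ℂ) :
    conv (Pavg K Φ f) f' = Pavg K Φ (conv f f') := by
  funext g
  simp only [Pavg, ← conv_comp_mul_left]
  simp only [conv, Pavg, Finset.mul_sum, Finset.sum_mul, mul_assoc]
  exact Finset.sum_comm

variable {K} in
theorem conv_Pavg_right_of_conj_invariant {f : G → ℂ}
    (hf : ∀ (k : K) (g : G), f (k * g * (k : G)⁻¹) = f g) (f' : G → ℂ) :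
    conv f (Pavg K Φ f') = Pavg K Φ (conv f f') := by
  funext g
  simp only [Pavg, ← conv_comp_mul_left_of_conj_invariant (hf _)]
  simp only [conv, Pavg, Finset.mul_sum, mul_left_comm (f _)]
  exact Finset.sum_comm

variable {K} in
theorem Pavg_conv_class_function_general {f₁ : G → ℂ}
    (h₁ : ∀ (k : K) (g : G), f₁ (k * g * (k : G)⁻¹) = f₁ g) (f₂ : G → ℂ) :
    Pavg K Φ (conv f₁ f₂) = conv (Pavg K Φ f₁) (Pavg K Φ f₂) :=
  calc
    Pavg K Φ (conv f₁ f₂) = Pavg K Φ (Pavg K Φ (conv f₁ f₂)) := (Pavg_idem K Φ _).symm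
    _ = Pavg K Φ (conv f₁ (Pavg K Φ f₂)) := by rw [conv_Pavg_right_of_conj_invariant Φ h₁]
    _ = conv (Pavg K Φ f₁) (Pavg K Φ f₂) := (conv_Pavg_left K Φ _ _).symm

end Convolution

/-- **`P_Φ` is multiplicative on central functions** : if `f₁` is a class
function on the finite group `G` and `f₂` is arbitrary, then
`P_Φ(f₁ * f₂) = (P_Φ f₁) * (P_Φ f₂)` (convolution products). -/
theorem Pavg_conv_class_function
    (G : Type) [Group G] [Fintype G]
    (K : Subgroup G) [Fintype K] (Φ : K →* ℂˣ)
    (f₁ f₂ : G → ℂ)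
    (h₁ : ∀ g h : G, f₁ (h * g * h⁻¹) = f₁ g) :
    Pavg K Φ (conv f₁ f₂) = conv (Pavg K Φ f₁) (Pavg K Φ f₂) :=
  Pavg_conv_class_function_general Φ (fun k g => h₁ g k) f₂
end

section
/- P_Φ maps the center of the group algebra onto the center of the twisted Hecke algebra: (i) for every class function f : G → ℂ, the function P_Φ f lies in L¹_Φ(G,K) and commutes under convolution with every element of L¹_Φ(G,K); (ii) for every h ∈ L¹_Φ(G,K) that commutes under convolution with every element of L¹_Φ(G,K), there exists a class function f : G → ℂ with P_Φ f = h. -/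
/-- Membership in the twisted Hecke algebra `L¹_Φ(G,K)` :
`f(k g k') = Φ(k) f(g) Φ(k')` for all `g ∈ G`, `k, k' ∈ K`. -/
def InTwistedHecke {G : Type} [Group G] (K : Subgroup G) (Φ : K →* ℂˣ)
    (f : G → ℂ) : Prop :=
  ∀ (g : G) (k k' : K), f ((k : G) * g * (k' : G)) = (Φ k : ℂ) * f g * (Φ k' : ℂ)

/-!
Let `e = |K|⁻¹ ∑ k, Φ(k) k` in the group algebra `A = ℂ[G]`. Then `e` is idempotent, `P_Φ` is left
multiplication by `e`, and `L¹_Φ(G,K)` is the corner `eAe`. Since `A` is semisimple, the two-sided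
ideal `AeA` has a central unit `u = ∑ᵢ bᵢ e dᵢ`. If `z` is central in `eAe`, then `c = ∑ᵢ bᵢ z dᵢ`
satisfies `e a c = z a` for every `a`. Hence `AeA` annihilates every commutator `r c - c r`, so that
`u c` is central in `A`, and `e u c = e c = z`.
-/

open MonoidAlgebra Subsemigroup

section Corner

variable {A : Type*} [Ring A] {e z : A}

theorem mul_mem_corner_of_mem_center (he : IsIdempotentElem e) (hz : z ∈ Subring.center A) :
    e * z ∈ corner e := by
  rw [Subring.mem_center_iff] at hz
  rw [mem_corner_iff he, ← mul_assoc, he.eq]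
  exact ⟨rfl, by rw [mul_assoc, ← hz, ← mul_assoc, he.eq]⟩

theorem commute_mul_of_mem_center_of_mem_corner {x : A} (he : IsIdempotentElem e)
    (hz : z ∈ Subring.center A) (hx : x ∈ corner e) : Commute (e * z) x := by
  obtain ⟨hex, hxe⟩ := (mem_corner_iff he).1 hx
  have he_comm : Commute e x := hex.trans hxe.symm
  exact he_comm.mul_left (Subring.mem_center_iff.1 hz x).symm

theorem exists_mem_forall_mul_eq_self [IsSemisimpleRing A] (I : Ideal A) :
    ∃ u ∈ I, ∀ x ∈ I, x * u = x := by
  obtain ⟨u, hu, rfl⟩ := IsSemisimpleRing.ideal_eq_span_idempotent I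
  refine ⟨u, Ideal.mem_span_singleton_self u, fun x hx => ?_⟩
  obtain ⟨a, rfl⟩ := Ideal.mem_span_singleton'.1 hx
  rw [mul_assoc, hu.eq]

theorem exists_mem_center_forall_mul_eq_self [IsSemisimpleRing A] (I : TwoSidedIdeal A) :
    ∃ u ∈ I, u ∈ Subring.center A ∧ ∀ x ∈ I, x * u = x := by
  obtain ⟨u, hu, hright⟩ := exists_mem_forall_mul_eq_self (TwoSidedIdeal.asIdeal I)
  obtain ⟨v, hv, hleft⟩ := exists_mem_forall_mul_eq_self (TwoSidedIdeal.asIdealOpposite I)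
  rw [TwoSidedIdeal.mem_asIdeal] at hu
  rw [TwoSidedIdeal.mem_asIdealOpposite] at hv
  replace hright (x : A) (hx : x ∈ I) : x * u = x := hright x (TwoSidedIdeal.mem_asIdeal.2 hx)
  replace hleft (x : A) (hx : x ∈ I) : v.unop * x = x :=
    MulOpposite.op_injective (hleft (.op x) (TwoSidedIdeal.mem_asIdealOpposite.2 hx))
  have hvu : v.unop = u := (hright _ hv).symm.trans (hleft u hu)
  rw [hvu] at hleft
  refine ⟨u, hu, Subring.mem_center_iff.2 fun a => ?_, hright⟩
  calc a * u = u * (a * u) := (hleft _ (I.mul_mem_left a u hu)).symm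
    _ = u * a * u := (mul_assoc _ _ _).symm
    _ = u * a := hright _ (I.mul_mem_right u a hu)

theorem mul_eq_zero_of_mem_span_singleton {d y : A} (h : ∀ a, e * a * d = 0)
    (hy : y ∈ TwoSidedIdeal.span {e}) : y * d = 0 := by
  suffices ∀ a, y * a * d = 0 by simpa using this 1
  induction hy using TwoSidedIdeal.span_induction with
  | mem y hy => rwa [Set.mem_singleton_iff.1 hy]
  | zero => simp
  | add x y _ _ hx hy => simp [add_mul, hx, hy]
  | neg x _ hx => simp [hx]
  | left_absorb r x _ hx => intro a; rw [mul_assoc r, mul_assoc r, hx, mul_zero]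
  | right_absorb r x _ hx => intro a; rw [mul_assoc x, hx]

theorem exists_forall_mul_eq_of_mem_span_singleton {x : A} (he : IsIdempotentElem e)
    (hz : z ∈ corner e) (hcomm : ∀ y ∈ corner e, Commute z y)
    (hx : x ∈ TwoSidedIdeal.span {e}) : ∃ c, ∀ a, e * a * c = z * a * x := by
  induction hx using TwoSidedIdeal.span_induction with
  | mem x hx =>
    rw [Set.mem_singleton_iff.1 hx]
    obtain ⟨hez, hze⟩ := (mem_corner_iff he).1 hz
    refine ⟨z, fun a => ?_⟩
    calc e * a * z = e * a * e * z := by rw [mul_assoc _ e, hez]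
      _ = z * (e * a * e) := (hcomm _ ⟨a, rfl⟩).eq.symm
      _ = z * a * e := by rw [← mul_assoc, ← mul_assoc, hze]
  | zero => exact ⟨0, by simp⟩
  | add x y _ _ hx hy =>
    obtain ⟨c, hc⟩ := hx
    obtain ⟨d, hd⟩ := hy
    exact ⟨c + d, fun a => by rw [mul_add, mul_add, hc, hd]⟩
  | neg x _ hx =>
    obtain ⟨c, hc⟩ := hx
    exact ⟨-c, fun a => by rw [mul_neg, mul_neg, hc]⟩
  | left_absorb r x _ hx =>
    obtain ⟨c, hc⟩ := hx
    exact ⟨r * c, fun a => by simpa only [mul_assoc] using hc (a * r)⟩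
  | right_absorb r x _ hx =>
    obtain ⟨c, hc⟩ := hx
    exact ⟨c * r, fun a => by rw [← mul_assoc, hc, mul_assoc]⟩

theorem exists_mem_center_mul_eq_of_mem_corner [IsSemisimpleRing A] (he : IsIdempotentElem e)
    (hz : z ∈ corner e) (hcomm : ∀ y ∈ corner e, Commute z y) :
    ∃ w ∈ Subring.center A, e * w = z := by
  obtain ⟨u, huI, hu, hunit⟩ := exists_mem_center_forall_mul_eq_self (TwoSidedIdeal.span {e})
  rw [Subring.mem_center_iff] at hu
  have hze : z * e = z := ((mem_corner_iff he).1 hz).2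
  have heI : e ∈ TwoSidedIdeal.span {e} := TwoSidedIdeal.subset_span rfl
  have heu : e * u = e := hunit e heI
  have hzu : z * u = z := by rw [← hze, mul_assoc, heu]
  obtain ⟨c, hc⟩ : ∃ c, ∀ a, e * a * c = z * a := by
    obtain ⟨c, hc⟩ := exists_forall_mul_eq_of_mem_span_singleton he hz hcomm huI
    exact ⟨c, fun a => by rw [hc, mul_assoc, hu, ← mul_assoc, hzu]⟩
  refine ⟨u * c, Subring.mem_center_iff.2 fun r => ?_, ?_⟩
  · have hann (a : A) : e * a * (r * c - c * r) = 0 := by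
      rw [mul_sub, ← mul_assoc, ← mul_assoc, mul_assoc e a r, hc, hc, mul_assoc, sub_self]
    have hcr : u * (r * c) = u * (c * r) :=
      sub_eq_zero.1 (by rw [← mul_sub, mul_eq_zero_of_mem_span_singleton hann huI])
    rw [← mul_assoc, hu, mul_assoc, hcr, mul_assoc]
  · simpa only [← mul_assoc, heu, mul_one] using hc 1

end Corner

section GroupAlgebra

variable {G : Type*} [Group G]

theorem mem_center_iff_coeff_conj_eq {R : Type*} [CommRing R] {x : R[G]} :
    x ∈ Subring.center R[G] ↔ ∀ g h : G, x.coeff (h * g * h⁻¹) = x.coeff g := by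
  rw [Subring.mem_center_iff]
  refine ⟨fun hx g h => ?_, fun hx y => ?_⟩
  · simpa using congrArg (fun y => coeff y (h * g)) (hx (single h 1)).symm
  · induction y using MonoidAlgebra.induction_linear with
    | zero => rw [zero_mul, mul_zero]
    | add y₁ y₂ h₁ h₂ => rw [add_mul, mul_add, h₁, h₂]
    | single h r =>
      ext g
      have hconj : x.coeff (h⁻¹ * g) = x.coeff (g * h⁻¹) := by
        simpa [mul_assoc] using (hx (h⁻¹ * g) h).symm
      rw [coeff_single_mul_apply, coeff_mul_single_apply, hconj, mul_comm]

variable {𝕜 : Type*} [Field 𝕜] (K : Subgroup G) [Fintype K] (Φ : K →* 𝕜ˣ)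

/-- The idempotent `|K|⁻¹ ∑ k, Φ(k) k` of the group algebra attached to a one-dimensional character
`Φ` of a finite subgroup `K`; the corner it cuts out is the twisted Hecke algebra. The weights are
`Φ k` rather than `(Φ k)⁻¹` because left translation by `k` precomposes functions with `k⁻¹`. -/
noncomputable def characterIdempotent : 𝕜[G] :=
  (Fintype.card K : 𝕜)⁻¹ • ∑ k : K, single (k : G) (Φ k : 𝕜)

theorem single_mul_characterIdempotent (k : K) :
    single (k : G) (Φ k : 𝕜) * characterIdempotent K Φ = characterIdempotent K Φ := by
  rw [characterIdempotent, mul_smul_comm, Finset.mul_sum]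
  congr 1
  exact Fintype.sum_equiv (Equiv.mulLeft k) _ _ fun j => by simp [single_mul_single]

theorem characterIdempotent_mul_single (k : K) :
    characterIdempotent K Φ * single (k : G) (Φ k : 𝕜) = characterIdempotent K Φ := by
  rw [characterIdempotent, smul_mul_assoc, Finset.sum_mul]
  congr 1
  exact Fintype.sum_equiv (Equiv.mulRight k) _ _ fun j => by simp [single_mul_single]

theorem coeff_characterIdempotent_mul (x : 𝕜[G]) (g : G) :
    (characterIdempotent K Φ * x).coeff g =
      (Fintype.card K : 𝕜)⁻¹ * ∑ k : K, ((Φ k)⁻¹ : 𝕜ˣ) * x.coeff (k * g) := by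
  simp only [characterIdempotent, smul_mul_assoc, Finset.sum_mul, coeff_smul_apply, coeff_sum,
    Finsupp.finsetSum_apply, coeff_single_mul_apply, smul_eq_mul]
  congr 1
  exact Fintype.sum_equiv (Equiv.inv K) _ _ fun k => by simp

variable [NeZero (Fintype.card K : 𝕜)]

theorem characterIdempotent_mul_eq_self_iff {x : 𝕜[G]} :
    characterIdempotent K Φ * x = x ↔ ∀ k : K, single (k : G) (Φ k : 𝕜) * x = x := by
  refine ⟨fun hx k => ?_, fun hx => ?_⟩
  · rw [← hx, ← mul_assoc, single_mul_characterIdempotent]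
  · have hcard : (Fintype.card K : 𝕜) ≠ 0 := NeZero.ne _
    simp [characterIdempotent, Finset.sum_mul, hx, ← Nat.cast_smul_eq_nsmul 𝕜, hcard]

theorem mul_characterIdempotent_eq_self_iff {x : 𝕜[G]} :
    x * characterIdempotent K Φ = x ↔ ∀ k : K, x * single (k : G) (Φ k : 𝕜) = x := by
  refine ⟨fun hx k => ?_, fun hx => ?_⟩
  · rw [← hx, mul_assoc, characterIdempotent_mul_single]
  · have hcard : (Fintype.card K : 𝕜) ≠ 0 := NeZero.ne _
    simp [characterIdempotent, Finset.mul_sum, hx, ← Nat.cast_smul_eq_nsmul 𝕜, hcard]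

theorem isIdempotentElem_characterIdempotent : IsIdempotentElem (characterIdempotent K Φ) :=
  (characterIdempotent_mul_eq_self_iff K Φ).2 (single_mul_characterIdempotent K Φ)

theorem mem_corner_characterIdempotent_iff {x : 𝕜[G]} :
    x ∈ corner (characterIdempotent K Φ) ↔
      ∀ (g : G) (k k' : K), x.coeff (k * g * k') = Φ k * x.coeff g * Φ k' := by
  rw [mem_corner_iff (isIdempotentElem_characterIdempotent K Φ),
    characterIdempotent_mul_eq_self_iff, mul_characterIdempotent_eq_self_iff]
  refine ⟨fun ⟨hleft, hright⟩ g k k' => ?_, fun hx => ⟨fun k => ?_, fun k => ?_⟩⟩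
  · calc x.coeff (k * g * k')
        = (single (k : G) (Φ k : 𝕜) * x * single (k' : G) (Φ k' : 𝕜)).coeff (k * g * k') := by
          rw [hleft, hright]
      _ = Φ k * x.coeff g * Φ k' := by simp
  · ext g
    simpa using (hx (k⁻¹ * g) k 1).symm
  · ext g
    simpa using (hx (g * k⁻¹) 1 k).symm

end GroupAlgebra

section Functions

/-- The identification of functions on a finite group with elements of its group algebra, a function
being read as a family of coefficients; it turns `conv` into multiplication. -/
noncomputable def toGroupAlgebra {G R : Type*} [Finite G] [Semiring R] : (G → R) ≃ R[G] :=
  Finsupp.equivFunOnFinite.symm.trans coeffEquiv.symm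

theorem coeff_toGroupAlgebra {G R : Type*} [Finite G] [Semiring R] (f : G → R) (g : G) :
    (toGroupAlgebra f).coeff g = f g :=
  rfl

variable {G : Type} [Group G]

theorem toGroupAlgebra_conv [Fintype G] (f f' : G → ℂ) :
    toGroupAlgebra (conv f f') = toGroupAlgebra f * toGroupAlgebra f' := by
  ext g
  rw [coeff_mul_apply_left, Finsupp.sum_fintype _ _ fun _ => zero_mul _]
  rfl

theorem conv_comm_iff_commute [Fintype G] {f f' : G → ℂ} :
    conv f f' = conv f' f ↔ Commute (toGroupAlgebra f) (toGroupAlgebra f') := by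
  rw [← toGroupAlgebra.injective.eq_iff, toGroupAlgebra_conv, toGroupAlgebra_conv]
  rfl

variable [Finite G] (K : Subgroup G) [Fintype K] (Φ : K →* ℂˣ)

theorem toGroupAlgebra_Pavg (f : G → ℂ) :
    toGroupAlgebra (Pavg K Φ f) = characterIdempotent K Φ * toGroupAlgebra f := by
  ext g
  simp only [coeff_characterIdempotent_mul, coeff_toGroupAlgebra, Pavg, one_div]

theorem inTwistedHecke_iff_mem_corner {f : G → ℂ} :
    InTwistedHecke K Φ f ↔ toGroupAlgebra f ∈ corner (characterIdempotent K Φ) :=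
  (mem_corner_characterIdempotent_iff K Φ (x := toGroupAlgebra f)).symm

end Functions

/-- **`P_Φ` maps the center of `L¹(G)` onto the center of `L¹_Φ(G,K)`** :
(i) for every class function `f`, `P_Φ f` lies in `L¹_Φ(G,K)` and commutes
with every element of `L¹_Φ(G,K)` under convolution; (ii) every element of
the center of `L¹_Φ(G,K)` is of the form `P_Φ f` for a class function `f`. -/
theorem Pavg_center_onto_center
    (G : Type) [Group G] [Fintype G]
    (K : Subgroup G) [Fintype K] (Φ : K →* ℂˣ) :
    (∀ f : G → ℂ, (∀ g h : G, f (h * g * h⁻¹) = f g) →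
      InTwistedHecke K Φ (Pavg K Φ f) ∧
        ∀ f' : G → ℂ, InTwistedHecke K Φ f' →
          conv (Pavg K Φ f) f' = conv f' (Pavg K Φ f)) ∧
    (∀ h : G → ℂ, InTwistedHecke K Φ h →
      (∀ f' : G → ℂ, InTwistedHecke K Φ f' → conv h f' = conv f' h) →
      ∃ f : G → ℂ, (∀ g h' : G, f (h' * g * h'⁻¹) = f g) ∧ Pavg K Φ f = h) := by
  have he := isIdempotentElem_characterIdempotent K Φ
  simp only [inTwistedHecke_iff_mem_corner, conv_comm_iff_commute, toGroupAlgebra_Pavg]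
  refine ⟨fun f hf => ?_, fun h hcorner hcomm => ?_⟩
  · have hcenter : toGroupAlgebra f ∈ Subring.center ℂ[G] := mem_center_iff_coeff_conj_eq.2 hf
    exact ⟨mul_mem_corner_of_mem_center he hcenter,
      fun f' => commute_mul_of_mem_center_of_mem_corner he hcenter⟩
  · obtain ⟨w, hw, hew⟩ := exists_mem_center_mul_eq_of_mem_corner he hcorner
      (toGroupAlgebra.forall_congr_right.1 hcomm)
    obtain ⟨f, rfl⟩ := toGroupAlgebra.surjective w
    exact ⟨f, mem_center_iff_coeff_conj_eq.1 hw,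
      toGroupAlgebra.injective ((toGroupAlgebra_Pavg K Φ f).trans hew)⟩
end
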